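/- The ordinary generating function F(t) = Σ_n |I_n(010,102)| t^n of inversion sequences avoiding 010 and 102 is algebraic and satisfies the cubic equation (t⁵ − 3t⁴ + 4t³ − 3t² + t)F³ + (4t⁴ − 8t³ + 6t² − 2t)F² + (−t⁴ + 8t³ − 11t² + 6t − 1)F − 2t³ + 5t² − 4t + 1 = 0. -/

import Mathlib

def Contains010 {n : ℕ} (σ : Fin n → ℕ) : Prop :=
  ∃ i j k : Fin n, i < j ∧ j < k ∧ σ i = σ k ∧ σ k < σ j

def Contains102 {n : ℕ} (σ : Fin n → ℕ) : Prop :=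
  ∃ i j k : Fin n, i < j ∧ j < k ∧ σ j < σ i ∧ σ i < σ k

section Aux
open PowerSeries

lemma ps_fix (φ : ℚ⟦X⟧ → ℚ⟦X⟧)
    (h : ∀ n a b, (X : ℚ⟦X⟧) ^ n ∣ a - b → (X : ℚ⟦X⟧) ^ (n + 1) ∣ φ a - φ b) :
    ∃ v, φ v = v := by
  have step : ∀ n, (X : ℚ⟦X⟧) ^ n ∣ φ^[n + 1] 0 - φ^[n] 0 := by
    intro n
    induction n with
    | zero => simp
    | succ n ih =>
      rw [Function.iterate_succ_apply', Function.iterate_succ_apply' φ n]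
      rw [Function.iterate_succ_apply'] at ih
      exact h _ _ _ ih
  have far : ∀ n m, (X : ℚ⟦X⟧) ^ n ∣ φ^[n + m] 0 - φ^[n] 0 := by
    intro n m
    induction m with
    | zero => simp
    | succ m ih =>
      have h1 : (X : ℚ⟦X⟧) ^ n ∣ φ^[n + m + 1] 0 - φ^[n + m] 0 :=
        (pow_dvd_pow _ (Nat.le_add_right n m)).trans (step (n + m))
      have := dvd_add h1 ih
      simpa [add_assoc] using this
  let v : ℚ⟦X⟧ := PowerSeries.mk fun k => coeff k (φ^[k + 1] 0)
  have hv : ∀ n, (X : ℚ⟦X⟧) ^ n ∣ v - φ^[n] 0 := by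
    intro n
    rw [X_pow_dvd_iff]
    intro m hm
    obtain ⟨d, rfl⟩ : ∃ d, n = m + 1 + d := ⟨n - (m + 1), by omega⟩
    have := (X_pow_dvd_iff.1 (far (m + 1) d)) m (by omega)
    simp only [map_sub, v, coeff_mk] at this ⊢
    linarith
  refine ⟨v, ?_⟩
  rw [← sub_eq_zero]
  ext n
  have h1 := h n _ _ (hv n)
  have h2 := hv (n + 1)
  rw [Function.iterate_succ_apply'] at h2
  have h3 := dvd_sub h1 h2
  have := X_pow_dvd_iff.1 h3 n (by omega)
  simpa using this

lemma exists_v : ∃ v : ℚ⟦X⟧, (v - 1) * ((1 - X * v) ^ 2 - X * (1 - X)) =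
    X * v * (1 - X * v - X * (1 - X)) := by
  obtain ⟨v, hv⟩ := ps_fix (fun v => 1 + X * ((v - 1) * (2 * v - X * v ^ 2 + 1 - X)
    + v * (1 - X * v - X * (1 - X)))) (by
    intro n a b ⟨c, hc⟩
    have ha : a = b + X ^ n * c := by rw [← hc]; ring
    have key : (a - b) ∣ ((a - 1) * (2 * a - X * a ^ 2 + 1 - X)
      + a * (1 - X * a - X * (1 - X))) - ((b - 1) * (2 * b - X * b ^ 2 + 1 - X)
      + b * (1 - X * b - X * (1 - X))) := by
      refine ⟨(2 * a - X * a ^ 2 + 1 - X) + (b - 1) * (2 - X * (a + b))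
        + (1 - X * a - X * (1 - X)) - b * X, by ring⟩
    obtain ⟨d, hd⟩ := key
    refine ⟨c * d, ?_⟩
    linear_combination X * hd + X * d * hc)
  refine ⟨v, ?_⟩
  linear_combination -hv

lemma const_dvd (u y : ℚ⟦X⟧) (hu : (X : ℚ⟦X⟧) ∣ u)
    (h : ((X : ℚ⟦X⟧⟦X⟧) - C u) ∣ C y) : y = 0 := by
  obtain ⟨q, hq⟩ := h
  have h0 : y = - u * coeff 0 q := by
    have := congrArg (coeff 0) hq
    simpa [sub_mul] using this
  have hs : ∀ n, coeff n q = u * coeff (n + 1) q := by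
    intro n
    have := congrArg (coeff (n + 1)) hq
    rw [sub_mul, map_sub, coeff_succ_X_mul, coeff_C_mul, coeff_C] at this
    simp only [Nat.succ_ne_zero, if_false] at this
    linear_combination -this
  have hp : ∀ n, y = - u ^ (n + 1) * coeff n q := by
    intro n
    induction n with
    | zero => simpa using h0
    | succ n ih => rw [ih, hs n]; ring
  ext n
  have : (X : ℚ⟦X⟧) ^ (n + 1) ∣ y := by
    rw [hp n]
    exact Dvd.dvd.mul_right ((dvd_neg).2 (pow_dvd_pow_of_dvd hu _)) _
  simpa using X_pow_dvd_iff.1 this n (by omega)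

lemma mk_conv (p q : ℕ → ℚ⟦X⟧) :
    (PowerSeries.mk fun h => ∑ a ∈ Finset.range (h + 1), p a * q (h - a)) =
      PowerSeries.mk p * PowerSeries.mk q := by
  ext1 n
  rw [coeff_mul, Finset.Nat.sum_antidiagonal_eq_sum_range_succ
    (fun i j => coeff i (PowerSeries.mk p) * coeff j (PowerSeries.mk q))]
  simp

lemma mk_shift (p : ℕ → ℚ⟦X⟧) :
    (X : ℚ⟦X⟧⟦X⟧) * (PowerSeries.mk fun h => p (h + 1)) = PowerSeries.mk p - C (p 0) := by
  ext1 n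
  cases n with
  | zero => simp
  | succ n => simp [coeff_succ_X_mul]

theorem algebra_part (W Z f Y : ℕ → ℚ⟦X⟧) (hW0 : W 0 = 1)
    (hZ : ∀ k, Z k = (W k - 1) + X * Z k)
    (hW : ∀ k, W (k + 1) - 1 = X * ∑ a ∈ Finset.range (k + 1), (W (a + 1) + W a * Z (k - a)))
    (hY : ∀ h, Y h = f h + X * Y (h + 1))
    (hf : ∀ h, f h = X * ∑ a ∈ Finset.range (h + 1), (W (a + 1) + W a * Y (h - a)))
    (F : ℚ⟦X⟧) (hF : F = 1 + f 0) :
    (X ^ 5 - 3 * X ^ 4 + 4 * X ^ 3 - 3 * X ^ 2 + X) * F ^ 3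
      + (4 * X ^ 4 - 8 * X ^ 3 + 6 * X ^ 2 - 2 * X) * F ^ 2
      + (-X ^ 4 + 8 * X ^ 3 - 11 * X ^ 2 + 6 * X - 1) * F
      - 2 * X ^ 3 + 5 * X ^ 2 - 4 * X + 1 = 0 := by
  obtain ⟨v, hv⟩ := exists_v
  set t : ℚ⟦X⟧ := X with ht
  set u := t * v with hu
  set den := (1 - u) ^ 2 - t * (1 - t) with hden
  have hdenu : IsUnit den := by
    rw [PowerSeries.isUnit_iff_constantCoeff]
    simp [hden, hu, ht]
  obtain ⟨d, hd⟩ := hdenu.exists_right_inv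
  set b := (1 - u - t * (1 - t)) * d with hb
  have hb1 : den * b = 1 - u - t * (1 - t) := by
    rw [hb]; linear_combination (1 - u - t * (1 - t)) * hd
  have hvb : v - 1 = t * v * b := by
    rw [hb]; linear_combination d * hv - (v - 1) * hd
  have hub : u - t = t * u * b := by rw [hu]; linear_combination t * hvb
  set x : ℚ⟦X⟧⟦X⟧ := X with hx
  set T : ℚ⟦X⟧⟦X⟧ := C t with hT
  set B := PowerSeries.mk W with hB
  set S := PowerSeries.mk (fun h => ∑ a ∈ Finset.range (h + 1), W (a + 1)) with hS
  set Yb := PowerSeries.mk Y with hYb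
  set Zb := PowerSeries.mk Z with hZb
  set fb := PowerSeries.mk f with hfb
  set g := PowerSeries.mk (fun k => W k - 1) with hg
  have e1 : fb = T * (S + B * Yb) := by
    rw [hB, hYb, ← mk_conv]
    ext1 n
    simp only [hfb, hS, hT, coeff_mk, coeff_C_mul, map_add, hf n, Finset.sum_add_distrib]
  have e2 : g = x * (T * (S + B * Zb)) := by
    rw [hB, hZb, ← mk_conv]
    ext1 n
    cases n with
    | zero => simp [hg, hx, hW0]
    | succ n =>
      simp only [hg, hS, hT, hx, coeff_mk, coeff_C_mul, coeff_succ_X_mul, map_add, hW n,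
        Finset.sum_add_distrib]
  have e3 : x * ((1 - x) * S) = B - 1 := by
    have : (1 - x) * S = PowerSeries.mk (fun h => W (h + 1)) := by
      ext1 n
      rw [sub_mul, one_mul, map_sub]
      cases n with
      | zero => simp [hS, hx]
      | succ n => simp [hS, hx, coeff_succ_X_mul, Finset.sum_range_succ _ (n + 1)]
    rw [this, hx, mk_shift, hW0]; simp [hB]
  have e4 : (1 - x) * (B - g) = 1 := by
    ext1 n
    rw [sub_mul, one_mul, map_sub]
    cases n with
    | zero => simp [hB, hg, hx]
    | succ n => simp [hB, hg, hx, coeff_succ_X_mul, coeff_one]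
  have e5 : Zb = g + T * Zb := by
    ext1 n
    simp only [hZb, hg, hT, coeff_mk, map_add, coeff_C_mul]
    exact hZ n
  have e6 : x * Yb = x * fb + T * (Yb - C (Y 0)) := by
    rw [hYb, hx, ← mk_shift, hfb, hT]
    have : PowerSeries.mk Y = PowerSeries.mk f + C t * PowerSeries.mk (fun h => Y (h + 1)) := by
      ext1 n
      simp only [coeff_mk, map_add, coeff_C_mul]
      exact hY n
    rw [this]; ring
  have q1 : ((1 - x) * B - 1) * (1 - T) = T * (1 - T) * (B - 1) + x * T * B * ((1 - x) * B - 1) := by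
    linear_combination (1 - x) * (1 - T) * e2 + T * (1 - T) * e3 + (1 - x) * x * T * B * e5
      + (1 - T - x * T * B) * e4
  set U : ℚ⟦X⟧⟦X⟧ := C u with hU
  set b' : ℚ⟦X⟧⟦X⟧ := C b with hb'
  have hub' : U - T = T * U * b' := by
    rw [hU, hT, hb', ← map_sub, hub, map_mul, map_mul]
  have hb1' : ((1 - U) ^ 2 - T * (1 - T)) * b' = 1 - U - T * (1 - T) := by
    have := congrArg (C : ℚ⟦X⟧ →+* ℚ⟦X⟧⟦X⟧) hb1
    simpa [hden, ← hU, ← hT, ← hb'] using this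
  have hunit : IsUnit ((1 - U) * (1 - T) - T * (1 - T) - U * T * ((1 - U) * (B + b') - 1)) := by
    rw [PowerSeries.isUnit_iff_constantCoeff, PowerSeries.isUnit_iff_constantCoeff]
    simp [hU, hT, hu, ht]
  have hdvd : (x - U) ∣ B - b' := by
    have : (x - U) ∣ (B - b') *
      ((1 - U) * (1 - T) - T * (1 - T) - U * T * ((1 - U) * (B + b') - 1)) := by
      refine ⟨B * (1 - T) + T * B * (((1 - x) * B - 1) - U * B), ?_⟩
      linear_combination q1 - hb1' - ((1 - U) * b' - 1) * hub'
    exact (hunit.dvd_mul_right).1 this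
  have hY0 : (1 - u) * t * Y 0 - t * (b - 1) = 0 := by
    apply const_dvd u _ ⟨v, hu⟩
    obtain ⟨c, hc⟩ := hdvd
    have : C ((1 - u) * t * Y 0 - t * (b - 1)) = (1 - U) * T * C (Y 0) - T * (b' - 1) := by
      simp [hU, hT, hb']
    rw [this]
    refine ⟨T * c + T * C (Y 0) - (1 - x) * Yb * (1 - T * B) + (1 - x) * Yb * T * U * c, ?_⟩
    linear_combination (1 - x) * e6 + x * (1 - x) * e1 + T * e3
      + (T + (1 - x) * Yb * T * U) * hc - (1 - x) * Yb * hub'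
  have htne : t ≠ 0 := by rw [ht]; exact X_ne_zero
  have h1t : (1 - t) ≠ 0 := by
    intro h
    have := congrArg constantCoeff h
    simp [ht] at this
  have h1u : (1 - u) ≠ 0 := by
    intro h
    have := congrArg constantCoeff h
    simp [hu, ht] at this
  have hY1 : (1 - u) * Y 0 = b - 1 := by
    apply mul_left_cancel₀ htne
    linear_combination hY0
  have hY2 : den * Y 0 = u := by
    apply mul_left_cancel₀ h1u
    linear_combination den * hY1 + hb1
  have hZ0 : Z 0 = 0 := by
    apply mul_left_cancel₀ h1t
    linear_combination hZ 0 + hW0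
  have hW1 : (1 - t) * W 1 = 1 := by
    have := hW 0
    simp [hZ0] at this
    linear_combination this
  have hf0 : f 0 = t * (W 1 + Y 0) := by
    have := hf 0
    simpa [hW0] using this
  have hFD : F * (den * (1 - t)) = den + (1 - t) * t * u := by
    rw [hF, hf0]
    linear_combination den * t * hW1 + (1 - t) * t * hY2
  have hD : (den * (1 - t)) ^ 3 ≠ 0 := pow_ne_zero _ (mul_ne_zero hdenu.ne_zero h1t)
  have hue : (u - t) * den - t * u * (1 - u - t * (1 - t)) = 0 := by
    rw [hu] at hv ⊢
    linear_combination t * hv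
  apply mul_right_cancel₀ hD
  rw [zero_mul]
  have expand : ((t ^ 5 - 3 * t ^ 4 + 4 * t ^ 3 - 3 * t ^ 2 + t) * F ^ 3
      + (4 * t ^ 4 - 8 * t ^ 3 + 6 * t ^ 2 - 2 * t) * F ^ 2
      + (-t ^ 4 + 8 * t ^ 3 - 11 * t ^ 2 + 6 * t - 1) * F
      - 2 * t ^ 3 + 5 * t ^ 2 - 4 * t + 1) * (den * (1 - t)) ^ 3 =
      (t ^ 5 - 3 * t ^ 4 + 4 * t ^ 3 - 3 * t ^ 2 + t) * (F * (den * (1 - t))) ^ 3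
      + (4 * t ^ 4 - 8 * t ^ 3 + 6 * t ^ 2 - 2 * t) * (F * (den * (1 - t))) ^ 2 * (den * (1 - t))
      + (-t ^ 4 + 8 * t ^ 3 - 11 * t ^ 2 + 6 * t - 1) * (F * (den * (1 - t))) * (den * (1 - t)) ^ 2
      + (- 2 * t ^ 3 + 5 * t ^ 2 - 4 * t + 1) * (den * (1 - t)) ^ 3 := by ring
  rw [expand, hFD]
  rw [hden] at hue ⊢
  linear_combination ((-1)*t^1*u^0 +
    (2)*t^1*u^1 +
    (-1)*t^1*u^2 +
    (6)*t^2*u^0 +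
    (-10)*t^2*u^1 +
    (4)*t^2*u^2 +
    (1)*t^2*u^3 +
    (-17)*t^3*u^0 +
    (22)*t^3*u^1 +
    (-8)*t^3*u^2 +
    (-4)*t^3*u^3 +
    (30)*t^4*u^0 +
    (-28)*t^4*u^1 +
    (13)*t^4*u^2 +
    (6)*t^4*u^3 +
    (-36)*t^5*u^0 +
    (22)*t^5*u^1 +
    (-17)*t^5*u^2 +
    (-4)*t^5*u^3 +
    (30)*t^6*u^0 +
    (-10)*t^6*u^1 +
    (14)*t^6*u^2 +
    (1)*t^6*u^3 +
    (-17)*t^7*u^0 +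
    (2)*t^7*u^1 +
    (-6)*t^7*u^2 +
    (6)*t^8*u^0 +
    (1)*t^8*u^2 +
    (-1)*t^9*u^0) * hue

/-- relation allowed between two later letters `b`, `c` after a letter `a` -/
def RelP (a b c : ℕ) : Prop := ¬ (a < b ∧ c = a) ∧ ¬ (b < a ∧ a < c)

def Av : List ℕ → Prop
  | [] => True
  | a :: w => Av w ∧ w.Pairwise (RelP a)

def Bd (s : ℕ) : ℕ → List ℕ → Prop
  | _, [] => True
  | h, a :: w => a < h ∧ Bd s (h + s) w

def lev (P : Set (List ℕ)) (n : ℕ) : Set (List ℕ) := {l | l ∈ P ∧ l.length = n}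

noncomputable def gf (P : Set (List ℕ)) : ℚ⟦X⟧ := PowerSeries.mk fun n => ((lev P n).ncard : ℚ)

def FinC (P : Set (List ℕ)) : Prop := ∀ n, (lev P n).Finite

lemma FinC.mono {P Q : Set (List ℕ)} (hQ : FinC Q) (h : P ⊆ Q) : FinC P :=
  fun n => (hQ n).subset fun _ hl => ⟨h hl.1, hl.2⟩

lemma gf_union {P Q : Set (List ℕ)} (hP : FinC P) (hQ : FinC Q) (h : Disjoint P Q) :
    gf (P ∪ Q) = gf P + gf Q := by
  ext n
  simp only [gf, coeff_mk, map_add]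
  have : lev (P ∪ Q) n = lev P n ∪ lev Q n := by
    ext l; simp only [lev, Set.mem_union, Set.mem_ofPred_eq]; tauto
  rw [this, Set.ncard_union_eq _ (hP n) (hQ n)]
  · push_cast; rfl
  · rw [Set.disjoint_left] at h ⊢
    intro l h1 h2
    exact h h1.1 h2.1

lemma gf_nil : gf {[]} = 1 := by
  ext n
  simp only [gf, coeff_mk, coeff_one]
  split_ifs with h
  · subst h
    have : lev {[]} 0 = {[]} := by ext l; simp [lev]
    simp [this]
  · have : lev {[]} n = ∅ := by
      ext l
      simp only [lev, Set.mem_singleton_iff, Set.mem_ofPred_eq, Set.mem_empty_iff_false, iff_false]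
      rintro ⟨rfl, h'⟩
      exact h h'.symm
    simp [this]

lemma gf_cons (a : ℕ) (P : Set (List ℕ)) : gf ((fun w => a :: w) '' P) = X * gf P := by
  ext n
  cases n with
  | zero =>
    have : lev ((fun w => a :: w) '' P) 0 = ∅ := by
      ext l
      simp only [lev, Set.mem_image, Set.mem_ofPred_eq, Set.mem_empty_iff_false, iff_false]
      rintro ⟨⟨w, _, rfl⟩, h⟩
      simp at h
    simp [gf, this]
  | succ n =>
    rw [coeff_succ_X_mul]
    simp only [gf, coeff_mk]
    have : lev ((fun w => a :: w) '' P) (n + 1) = (fun w => a :: w) '' lev P n := by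
      ext l
      simp only [lev, Set.mem_image, Set.mem_ofPred_eq]
      constructor
      · rintro ⟨⟨w, hw, rfl⟩, h⟩
        exact ⟨w, ⟨hw, by simpa using h⟩, rfl⟩
      · rintro ⟨w, ⟨hw, h⟩, rfl⟩
        exact ⟨⟨w, hw, rfl⟩, by simpa using h⟩
    rw [this, Set.ncard_image_of_injective]
    intro x y h
    simpa using h

lemma gf_prod (m : List ℕ → List ℕ → List ℕ) (P Q : Set (List ℕ)) (hP : FinC P) (hQ : FinC Q)
    (hlen : ∀ u v, (m u v).length = u.length + v.length)
    (hinj : ∀ u ∈ P, ∀ v ∈ Q, ∀ u' ∈ P, ∀ v' ∈ Q, m u v = m u' v' → u = u' ∧ v = v') :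
    gf (Set.image2 m P Q) = gf P * gf Q := by
  classical
  ext n
  rw [coeff_mul]
  simp only [gf, coeff_mk]
  let S : Finset (List ℕ × List ℕ) := (Finset.HasAntidiagonal.antidiagonal n).biUnion fun x =>
    (hP x.1).toFinset ×ˢ (hQ x.2).toFinset
  have hS : ∀ z, z ∈ S ↔ z.1 ∈ P ∧ z.2 ∈ Q ∧ z.1.length + z.2.length = n := by
    intro z
    simp only [S, Finset.mem_biUnion, Finset.HasAntidiagonal.mem_antidiagonal, Finset.mem_product,
      Set.Finite.mem_toFinset, lev, Set.mem_ofPred_eq]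
    constructor
    · rintro ⟨x, hx, ⟨h1, h2⟩, h3, h4⟩
      exact ⟨h1, h3, by omega⟩
    · rintro ⟨h1, h2, h3⟩
      exact ⟨(z.1.length, z.2.length), h3, ⟨h1, rfl⟩, h2, rfl⟩
  have him : lev (Set.image2 m P Q) n = (fun z : List ℕ × List ℕ => m z.1 z.2) '' (S : Set _) := by
    ext l
    simp only [lev, Set.mem_image2, Set.mem_ofPred_eq, Set.mem_image, Finset.mem_coe, hS]
    constructor
    · rintro ⟨⟨u, hu, v, hv, rfl⟩, h⟩
      exact ⟨(u, v), ⟨hu, hv, by rw [← h, hlen]⟩, rfl⟩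
    · rintro ⟨⟨u, v⟩, ⟨hu, hv, h⟩, rfl⟩
      exact ⟨⟨u, hu, v, hv, rfl⟩, by rw [hlen]; exact h⟩
  rw [him, Set.InjOn.ncard_image, Set.ncard_coe_finset, Finset.card_biUnion]
  · push_cast
    refine Finset.sum_congr rfl fun x _ => ?_
    rw [Finset.card_product, ← Set.ncard_eq_toFinset_card _ (hP x.1),
      ← Set.ncard_eq_toFinset_card _ (hQ x.2)]
    push_cast; rfl
  · intro x _ y _ hxy
    rw [Function.onFun, Finset.disjoint_left]
    intro z hz hz'
    simp only [Finset.mem_product, Set.Finite.mem_toFinset, lev, Set.mem_ofPred_eq] at hz hz'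
    apply hxy
    ext
    · rw [← hz.1.2, hz'.1.2]
    · rw [← hz.2.2, hz'.2.2]
  · rintro ⟨u, v⟩ hz ⟨u', v'⟩ hz' h
    rw [Finset.mem_coe, hS] at hz hz'
    obtain ⟨h1, h2⟩ := hinj u hz.1 v hz.2.1 u' hz'.1 v' hz'.2.1 h
    simp [h1, h2]

lemma finC_Bd (s h : ℕ) : FinC {l | Bd s h l} := by
  intro n
  induction n generalizing h with
  | zero =>
    refine (Set.finite_singleton ([] : List ℕ)).subset ?_
    rintro l ⟨_, hl⟩
    simpa using hl
  | succ n ih =>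
    refine (Set.Finite.image2 (fun a w => a :: w) (Set.finite_Iio h) (ih (h + s))).subset ?_
    rintro l ⟨hl, hn⟩
    cases l with
    | nil => simp at hn
    | cons a w =>
      exact ⟨a, hl.1, w, ⟨hl.2, by simpa using hn⟩, rfl⟩

def Wd (s h : ℕ) : Set (List ℕ) := {l | Av l ∧ Bd s h l}
def Td (s H a : ℕ) : Set (List ℕ) := {w | Av w ∧ w.Pairwise (RelP a) ∧ Bd s H w}
def Qd (s H a : ℕ) : Set (List ℕ) := {w | w ∈ Td s H a ∧ ∃ b ∈ w, a < b}

lemma finC_Wd (s h) : FinC (Wd s h) := (finC_Bd s h).mono fun _ h => h.2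
lemma finC_Td (s h a) : FinC (Td s h a) := (finC_Bd s h).mono fun _ h => h.2.2
lemma finC_Qd (s h a) : FinC (Qd s h a) := (finC_Td s h a).mono fun _ h => h.1

lemma finC_cons (a : ℕ) {P : Set (List ℕ)} (hP : FinC P) : FinC ((fun w => a :: w) '' P) := by
  intro n
  refine ((hP (n - 1)).image (fun w => a :: w)).subset ?_
  rintro _ ⟨⟨w, hw, rfl⟩, h⟩
  refine ⟨w, ⟨hw, ?_⟩, rfl⟩
  simp at h; omega

lemma gf_biUnion_cons (P : ℕ → Set (List ℕ)) (hP : ∀ a, FinC (P a)) (h : ℕ) :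
    FinC {l | ∃ a < h, ∃ w ∈ P a, l = a :: w} ∧
    gf {l | ∃ a < h, ∃ w ∈ P a, l = a :: w} = X * ∑ a ∈ Finset.range h, gf (P a) := by
  induction h with
  | zero =>
    have : {l | ∃ a < 0, ∃ w ∈ P a, l = a :: w} = ∅ := by ext; simp
    rw [this]
    constructor
    · intro n; simp [lev]
    · ext n; simp [gf, lev]
  | succ h ih =>
    have : {l | ∃ a < h + 1, ∃ w ∈ P a, l = a :: w} =
        {l | ∃ a < h, ∃ w ∈ P a, l = a :: w} ∪ (fun w => h :: w) '' P h := by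
      ext l
      simp only [Set.mem_ofPred_eq, Set.mem_union, Set.mem_image]
      constructor
      · rintro ⟨a, ha, w, hw, rfl⟩
        rcases Nat.lt_succ_iff_lt_or_eq.1 ha with h1 | rfl
        · exact Or.inl ⟨a, h1, w, hw, rfl⟩
        · exact Or.inr ⟨w, hw, rfl⟩
      · rintro (⟨a, ha, w, hw, rfl⟩ | ⟨w, hw, rfl⟩)
        · exact ⟨a, by omega, w, hw, rfl⟩
        · exact ⟨h, by omega, w, hw, rfl⟩
    rw [this]
    constructor
    · intro n
      refine ((ih.1 n).union (finC_cons h (hP h) n)).subset ?_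
      rintro l ⟨hl | hl, hn⟩
      · exact Or.inl ⟨hl, hn⟩
      · exact Or.inr ⟨hl, hn⟩
    · rw [gf_union ih.1 (finC_cons h (hP h)), ih.2, gf_cons, Finset.sum_range_succ, mul_add]
      rw [Set.disjoint_left]
      rintro _ ⟨a, ha, w, hw, rfl⟩ ⟨w', _, h'⟩
      simp only [List.cons.injEq] at h'
      omega

lemma Wd_eq (s h : ℕ) :
    Wd s h = {[]} ∪ {l | ∃ a < h, ∃ w ∈ Td s (h + s) a, l = a :: w} := by
  ext l
  cases l with
  | nil => simp [Wd, Av, Bd]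
  | cons a w =>
    simp only [Wd, Av, Bd, Td, Set.mem_ofPred_eq, Set.mem_union, Set.mem_singleton_iff,
      List.cons.injEq, reduceCtorEq, false_or]
    constructor
    · rintro ⟨⟨h1, h2⟩, h3, h4⟩
      exact ⟨a, h3, w, ⟨h1, h2, h4⟩, rfl, rfl⟩
    · rintro ⟨a', h3, w', ⟨h1, h2, h4⟩, rfl, rfl⟩
      exact ⟨⟨h1, h2⟩, h3, h4⟩

lemma gf_Wd (s h : ℕ) : gf (Wd s h) - 1 = X * ∑ a ∈ Finset.range h, gf (Td s (h + s) a) := by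
  obtain ⟨h1, h2⟩ := gf_biUnion_cons (fun a => Td s (h + s) a) (fun a => finC_Td _ _ _) h
  rw [Wd_eq, gf_union _ h1, gf_nil, h2]
  · ring
  · rw [Set.disjoint_left]
    rintro _ rfl ⟨a, _, w, _, h⟩
    simp at h
  · exact (finC_Wd s h).mono (by rw [Wd_eq]; exact Set.subset_union_left)

lemma gf_Wd_ne (s h : ℕ) : gf {l | l ∈ Wd s h ∧ l ≠ []} = gf (Wd s h) - 1 := by
  have : Wd s h = {[]} ∪ {l | l ∈ Wd s h ∧ l ≠ []} := by
    ext l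
    cases l with
    | nil => simp [Wd, Av, Bd]
    | cons a w => simp
  conv_rhs => rw [this]
  rw [gf_union, gf_nil]
  · ring
  · exact (finC_Wd s h).mono (by rintro _ rfl; simp [Wd, Av, Bd])
  · exact (finC_Wd s h).mono fun _ h => h.1
  · rw [Set.disjoint_left]
    rintro _ rfl h
    exact h.2 rfl

lemma Bd_of_lt {s h a : ℕ} {w : List ℕ} (ha : a ≤ h) (hw : ∀ b ∈ w, b < a) : Bd s h w := by
  induction w generalizing h with
  | nil => trivial
  | cons b w ih =>
    simp only [List.mem_cons, forall_eq_or_imp] at hw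
    exact ⟨by omega, ih (by omega) hw.2⟩

lemma Bd_zero {h : ℕ} {w : List ℕ} : Bd 0 h w ↔ ∀ b ∈ w, b < h := by
  constructor
  · intro hw
    induction w with
    | nil => simp
    | cons b w ih =>
      simp only [List.mem_cons, forall_eq_or_imp]
      exact ⟨hw.1, ih hw.2⟩
  · exact Bd_of_lt le_rfl

lemma gf_Td (s H a : ℕ) (ha : a < H) : gf (Td s H a) = gf (Wd 0 (a + 1)) + gf (Qd s H a) := by
  have : Td s H a = Wd 0 (a + 1) ∪ Qd s H a := by
    ext w
    simp only [Qd, Td, Wd, Set.mem_ofPred_eq, Set.mem_union, Bd_zero]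
    constructor
    · rintro ⟨h1, h2, h3⟩
      by_cases hb : ∃ b ∈ w, a < b
      · exact Or.inr ⟨⟨h1, h2, h3⟩, hb⟩
      · push Not at hb
        exact Or.inl ⟨h1, fun b hb' => Nat.lt_succ_of_le (hb b hb')⟩
    · rintro (⟨h1, h2⟩ | h)
      · refine ⟨h1, ?_, Bd_of_lt ha h2⟩
        rw [List.pairwise_iff_forall_sublist]
        intro b c hbc
        have hb := h2 b (hbc.subset (by simp))
        have hc := h2 c (hbc.subset (by simp))
        constructor <;> omega
      · exact h.1
  rw [this, gf_union (finC_Wd _ _) (finC_Qd _ _ _)]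
  rw [Set.disjoint_left]
  rintro w ⟨_, h2⟩ ⟨_, b, hb, hab⟩
  have := Bd_zero.1 h2 b hb
  omega

lemma Av_append {a : ℕ} {u v : List ℕ} (hu : ∀ b ∈ u, a < b) (hv : ∀ b ∈ v, b < a) :
    Av (u ++ v) ↔ Av u ∧ Av v := by
  induction u with
  | nil => simp [Av]
  | cons c u ih =>
    simp only [List.mem_cons, forall_eq_or_imp] at hu
    simp only [List.cons_append, Av, ih hu.2, List.pairwise_append]
    constructor
    · tauto
    · rintro ⟨⟨h1, h2⟩, h3⟩
      refine ⟨⟨h1, h3⟩, h2, ?_, ?_⟩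
      · rw [List.pairwise_iff_forall_sublist]
        intro x y hxy
        have hb := hv x (hxy.subset (by simp))
        have hc := hv y (hxy.subset (by simp))
        constructor <;> omega
      · intro x hx y hy
        have := hv y hy
        constructor <;> omega

lemma Rel_append {a : ℕ} {u v : List ℕ} (hu : ∀ b ∈ u, a < b) (hv : ∀ b ∈ v, b < a) :
    (u ++ v).Pairwise (RelP a) := by
  rw [List.pairwise_append]
  refine ⟨?_, ?_, ?_⟩
  · rw [List.pairwise_iff_forall_sublist]
    intro x y hxy
    have hb := hu x (hxy.subset (by simp))
    have hc := hu y (hxy.subset (by simp))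
    constructor <;> omega
  · rw [List.pairwise_iff_forall_sublist]
    intro x y hxy
    have hb := hv x (hxy.subset (by simp))
    have hc := hv y (hxy.subset (by simp))
    constructor <;> omega
  · intro x hx y hy
    have := hv y hy
    have := hu x hx
    constructor <;> omega

lemma Bd_append {s h a : ℕ} {u v : List ℕ} (ha : a ≤ h) (hv : ∀ b ∈ v, b < a) :
    Bd s h (u ++ v) ↔ Bd s h u := by
  induction u generalizing h with
  | nil => simp [Bd, Bd_of_lt ha hv]
  | cons c u ih => simp only [List.cons_append, Bd, ih (show a ≤ h + s by omega)]

lemma Av_map (c : ℕ) (u : List ℕ) : Av (u.map (· + c)) ↔ Av u := by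
  induction u with
  | nil => simp [Av]
  | cons b u ih =>
    have : ∀ x y, RelP (b + c) (x + c) (y + c) ↔ RelP b x y := by
      intro x y; simp [RelP]
    simp [Av, ih, List.pairwise_map, this]

lemma Bd_map (s k c : ℕ) (u : List ℕ) : Bd s (k + c) (u.map (· + c)) ↔ Bd s k u := by
  induction u generalizing k with
  | nil => simp [Bd]
  | cons b u ih =>
    simp only [List.map_cons, Bd, add_lt_add_iff_right, ← ih (k + s)]
    rw [add_right_comm]

lemma split_word {a : ℕ} {w : List ℕ} (h : w.Pairwise (RelP a)) (hne : ∀ b ∈ w, b ≠ a) :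
    ∃ u v, w = u ++ v ∧ (∀ b ∈ u, a < b) ∧ (∀ b ∈ v, b < a) := by
  induction w with
  | nil => exact ⟨[], [], by simp⟩
  | cons b w ih =>
    rw [List.pairwise_cons] at h
    simp only [List.mem_cons, forall_eq_or_imp] at hne
    rcases lt_or_gt_of_ne hne.1 with hb | hb
    · refine ⟨[], b :: w, rfl, by simp, ?_⟩
      simp only [List.mem_cons, forall_eq_or_imp]
      refine ⟨hb, fun c hc => ?_⟩
      have h1 := (h.1 c hc).2
      have h2 := hne.2 c hc
      omega
    · obtain ⟨u, v, rfl, hu, hv⟩ := ih h.2 hne.2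
      refine ⟨b :: u, v, rfl, ?_, hv⟩
      simp only [List.mem_cons, forall_eq_or_imp]
      exact ⟨hb, hu⟩

def glue (a : ℕ) (u v : List ℕ) : List ℕ := u.map (· + (a + 1)) ++ v

lemma Qd_eq (s k a : ℕ) : Qd s (k + (a + 1)) a =
    (fun w => a :: w) '' Qd s (k + s + (a + 1)) a ∪
      Set.image2 (glue a) {l | l ∈ Wd s k ∧ l ≠ []} (Wd 0 a) := by
  ext w
  simp only [Set.mem_union, Set.mem_image, Set.mem_image2]
  constructor
  · rintro ⟨⟨h1, h2, h3⟩, c, hc, hac⟩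
    cases w with
    | nil => simp at hc
    | cons b w =>
      have hr := List.pairwise_cons.1 h2
      rcases lt_trichotomy b a with hb | rfl | hb
      · exfalso
        rcases List.mem_cons.1 hc with rfl | hc
        · omega
        · exact (hr.1 c hc).2 ⟨hb, hac⟩
      · left
        refine ⟨w, ⟨⟨h1.1, hr.2, ?_⟩, c, ?_, hac⟩, rfl⟩
        · rw [add_right_comm]; exact h3.2
        · rcases List.mem_cons.1 hc with rfl | hc
          · omega
          · exact hc
      · right
        have hne : ∀ c ∈ b :: w, c ≠ a := by
          simp only [List.mem_cons, forall_eq_or_imp]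
          exact ⟨by omega, fun c hc hca => (hr.1 c hc).1 ⟨hb, hca⟩⟩
        obtain ⟨u, v, huv, hu, hv⟩ := split_word h2 hne
        have hmap : (u.map (· - (a + 1))).map (· + (a + 1)) = u := by
          rw [List.map_map]
          conv_rhs => rw [← List.map_id u]
          apply List.map_congr_left
          intro x hx
          have := hu x hx
          simp only [Function.comp, id]; omega
        rw [huv] at h1 h3
        rw [Av_append hu hv] at h1
        rw [Bd_append (by omega) hv] at h3
        refine ⟨u.map (· - (a + 1)), ⟨⟨?_, ?_⟩, ?_⟩, v, ⟨h1.2, Bd_zero.2 hv⟩, ?_⟩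
        · rw [← Av_map (a + 1), hmap]; exact h1.1
        · rw [← Bd_map s k (a + 1), hmap]; exact h3
        · intro hnil
          rw [List.map_eq_nil_iff] at hnil
          subst hnil
          have := hv b (by rw [List.nil_append] at huv; rw [← huv]; simp)
          omega
        · rw [glue, hmap, huv]
  · rintro (⟨w, ⟨⟨h1, h2, h3⟩, c, hc, hac⟩, rfl⟩ | ⟨u, ⟨⟨h1, h2⟩, h3⟩, v, ⟨h4, h5⟩, rfl⟩)
    · refine ⟨⟨⟨h1, h2⟩, ?_, ⟨by omega, ?_⟩⟩, c, List.mem_cons_of_mem _ hc, hac⟩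
      · rw [List.pairwise_cons]
        refine ⟨fun c _ => ?_, h2⟩
        constructor <;> omega
      · rw [add_right_comm]; exact h3
    · have hv := Bd_zero.1 h5
      have hu : ∀ b ∈ u.map (· + (a + 1)), a < b := by
        intro b hb
        obtain ⟨x, _, rfl⟩ := List.mem_map.1 hb
        omega
      refine ⟨⟨?_, ?_, ?_⟩, ?_⟩
      · rw [glue, Av_append hu hv, Av_map]; exact ⟨h1, h4⟩
      · exact Rel_append hu hv
      · rw [glue, Bd_append (by omega) hv, Bd_map]; exact h2
      · obtain ⟨x, u', rfl⟩ := List.exists_cons_of_ne_nil h3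
        exact ⟨x + (a + 1), by simp [glue], by omega⟩

lemma glue_filter (a : ℕ) (u v : List ℕ) (hv : ∀ b ∈ v, b < a) :
    (glue a u v).filter (fun x => decide (a < x)) = u.map (· + (a + 1)) ∧
    (glue a u v).filter (fun x => decide (x < a)) = v := by
  rw [glue, List.filter_append, List.filter_append]
  constructor
  · rw [List.filter_eq_self.2, List.filter_eq_nil_iff.2, List.append_nil]
    · intro x hx
      have := hv x hx
      simp; omega
    · intro b hb
      obtain ⟨x, _, rfl⟩ := List.mem_map.1 hb
      simp; omega
  · rw [List.filter_eq_nil_iff.2, List.filter_eq_self.2, List.nil_append]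
    · intro x hx
      have := hv x hx
      simpa
    · intro b hb
      obtain ⟨x, _, rfl⟩ := List.mem_map.1 hb
      simp; omega

lemma gf_Qd (s k a : ℕ) : gf (Qd s (k + (a + 1)) a) =
    X * gf (Qd s (k + s + (a + 1)) a) + (gf (Wd s k) - 1) * gf (Wd 0 a) := by
  have hQ := finC_Qd s (k + (a + 1)) a
  rw [Qd_eq] at hQ
  rw [Qd_eq, gf_union, gf_cons, gf_prod, gf_Wd_ne]
  · exact (finC_Wd s k).mono fun _ h => h.1
  · exact finC_Wd 0 a
  · intro u v; simp [glue]
  · intro u _ v hv u' _ v' hv' h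
    obtain ⟨e1, e2⟩ := glue_filter a u v (Bd_zero.1 hv.2)
    obtain ⟨e3, e4⟩ := glue_filter a u' v' (Bd_zero.1 hv'.2)
    rw [h] at e1 e2
    refine ⟨?_, e2.symm.trans e4⟩
    exact List.map_injective_iff.2 (add_left_injective (a + 1)) (e1.symm.trans e3)
  · exact hQ.mono Set.subset_union_left
  · exact hQ.mono Set.subset_union_right
  · rw [Set.disjoint_left]
    rintro _ ⟨w, _, rfl⟩ ⟨u, ⟨_, hu⟩, v, _, h⟩
    obtain ⟨x, u', rfl⟩ := List.exists_cons_of_ne_nil hu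
    simp only [glue, List.map_cons, List.cons_append, List.cons.injEq] at h
    omega

lemma Wd_zero (s : ℕ) : gf (Wd s 0) = 1 := by
  have := gf_Wd s 0
  simp only [Finset.range_zero, Finset.sum_empty, mul_zero] at this
  linear_combination this

noncomputable def Ys (s k : ℕ) : ℚ⟦X⟧ := gf (Qd s (k + 1) 0)

lemma Ys_rec (s k : ℕ) : Ys s k = (gf (Wd s k) - 1) + X * Ys s (k + s) := by
  have := gf_Qd s k 0
  rw [Wd_zero] at this
  simp only [zero_add] at this
  rw [Ys, this, Ys]; ring

lemma gf_Qd_eq (s k a : ℕ) : gf (Qd s (k + (a + 1)) a) = gf (Wd 0 a) * Ys s k := by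
  ext n
  induction n generalizing k with
  | zero =>
    rw [gf_Qd, Ys_rec, mul_add, ← mul_assoc, mul_comm _ X, mul_assoc, mul_comm (gf (Wd 0 a))]
    simp
  | succ n ih =>
    rw [gf_Qd, Ys_rec, mul_add, ← mul_assoc _ X, mul_comm _ X, mul_assoc X, mul_comm (gf (Wd 0 a)),
      map_add, map_add, coeff_succ_X_mul, coeff_succ_X_mul, ih, add_comm]

lemma Wd_rec (s k : ℕ) : gf (Wd s (k + 1)) - 1 =
    X * ∑ a ∈ Finset.range (k + 1), (gf (Wd 0 (a + 1)) + gf (Wd 0 a) * Ys s (k - a + s)) := by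
  rw [gf_Wd]
  congr 1
  refine Finset.sum_congr rfl fun a ha => ?_
  rw [Finset.mem_range] at ha
  rw [gf_Td _ _ _ (by omega), ← gf_Qd_eq, show k + 1 + s = k - a + s + (a + 1) by omega]

lemma Bd_ofFn {n : ℕ} (h : ℕ) (σ : Fin n → ℕ) :
    Bd 1 h (List.ofFn σ) ↔ ∀ i, σ i < h + i.val := by
  induction n generalizing h with
  | zero => simp [Bd]
  | succ n ih =>
    rw [List.ofFn_succ, Fin.forall_fin_succ]
    simp only [Bd, ih, Fin.val_zero, Fin.val_succ, add_zero, add_assoc, add_comm 1]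

lemma Av_ofFn {n : ℕ} (σ : Fin n → ℕ) :
    Av (List.ofFn σ) ↔ ¬ Contains010 σ ∧ ¬ Contains102 σ := by
  induction n with
  | zero => simp [Av, Contains010, Contains102]
  | succ n ih =>
    rw [List.ofFn_succ]
    simp only [Av, ih, List.pairwise_ofFn, Contains010, Contains102, RelP, not_exists]
    simp only [Fin.forall_fin_succ (n := n), Fin.succ_lt_succ_iff, Fin.succ_pos, Fin.not_lt_zero,
      lt_irrefl, false_implies, true_implies, not_false_eq_true, implies_true, true_and, not_and, forall_and]
    constructor
    · rintro ⟨⟨h1, h2⟩, h3, h4⟩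
      refine ⟨⟨fun i j hij he hl => ?_, fun i j k => h1 i j k⟩, fun i j hij he hl => ?_,
        fun i j k => h2 i j k⟩
      · exact h3 i j hij (by omega) he.symm
      · exact h4 i j hij he hl
    · rintro ⟨⟨h3, h1⟩, h4, h2⟩
      refine ⟨⟨h1, h2⟩, fun i j hij he hl => ?_, fun i j hij he hl => ?_⟩
      · exact h3 i j hij hl.symm (by omega)
      · exact h4 i j hij he hl

lemma card_eq (n : ℕ) : Nat.card {σ : Fin n → ℕ //
        (∀ i, σ i ≤ i.val) ∧ ¬ Contains010 σ ∧ ¬ Contains102 σ} = (lev (Wd 1 1) n).ncard := by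
  have : lev (Wd 1 1) n = List.ofFn '' {σ : Fin n → ℕ |
      (∀ i, σ i ≤ i.val) ∧ ¬ Contains010 σ ∧ ¬ Contains102 σ} := by
    have key : ∀ σ : Fin n → ℕ, List.ofFn σ ∈ Wd 1 1 ↔
        ((∀ i, σ i ≤ i.val) ∧ ¬ Contains010 σ ∧ ¬ Contains102 σ) := by
      intro σ
      simp only [Wd, Set.mem_ofPred_eq, Bd_ofFn, Av_ofFn, Nat.lt_one_add_iff]
      tauto
    ext l
    constructor
    · rintro ⟨hl, rfl⟩
      refine ⟨l.get, ?_, List.ofFn_get l⟩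
      rw [Set.mem_ofPred_eq, ← key, List.ofFn_get]
      exact hl
    · rintro ⟨σ, hσ, rfl⟩
      exact ⟨(key σ).2 hσ, List.length_ofFn⟩
  rw [this, Set.ncard_image_of_injective _ List.ofFn_injective]
  rfl

end Aux

open PowerSeries in
/-- The ordinary generating function `F` of inversion sequences avoiding 010 and
102 satisfies the cubic equation
`(t^5 - 3t^4 + 4t^3 - 3t^2 + t) F^3 + (4t^4 - 8t^3 + 6t^2 - 2t) F^2
  + (-t^4 + 8t^3 - 11t^2 + 6t - 1) F - 2t^3 + 5t^2 - 4t + 1 = 0`. -/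
theorem gf_I_010_102 :
    letI F : PowerSeries ℚ := PowerSeries.mk fun n =>
      (Nat.card {σ : Fin n → ℕ //
        (∀ i, σ i ≤ i.val) ∧ ¬ Contains010 σ ∧ ¬ Contains102 σ} : ℚ)
    (X ^ 5 - 3 * X ^ 4 + 4 * X ^ 3 - 3 * X ^ 2 + X) * F ^ 3
      + (4 * X ^ 4 - 8 * X ^ 3 + 6 * X ^ 2 - 2 * X) * F ^ 2
      + (-X ^ 4 + 8 * X ^ 3 - 11 * X ^ 2 + 6 * X - 1) * F
      - 2 * X ^ 3 + 5 * X ^ 2 - 4 * X + 1 = 0 := by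
  refine algebra_part (fun k => gf (Wd 0 k)) (fun k => Ys 0 k)
    (fun h => gf (Wd 1 (h + 1)) - 1) (fun h => Ys 1 (h + 1)) (Wd_zero 0) (fun k => Ys_rec 0 k)
    (fun k => Wd_rec 0 k) (fun h => Ys_rec 1 (h + 1)) (fun h => Wd_rec 1 h) _ ?_
  ext n
  simp only [coeff_mk, card_eq, zero_add, add_sub_cancel, gf]
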